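/- In the plane, let a and g be nonzero vectors with angle φ between them, where π/2 − Δ < φ, and let p' = g + α a with α = (‖g‖/‖a‖)(sin φ tan Δ − cos φ). Then the angle between a and p' equals π/2 − Δ. -/

import Mathlib

open Real RealInnerProductSpace InnerProductGeometry

/-- Direction step of the cone-projection derivation: the vector
`p' = g + α a` with `α = (‖g‖/‖a‖)(sin φ tan Δ − cos φ)` makes angle `π/2 − Δ` with `a`. -/
theorem cone_projection_direction {a g : EuclideanSpace ℝ (Fin 2)} (Δ φ : ℝ)
    (ha : a ≠ 0) (hg : g ≠ 0) (hΔ0 : 0 ≤ Δ) (hΔ1 : Δ < π / 2)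
    (hφ : φ = angle a g) (hφ1 : π / 2 - Δ < φ) (hφ2 : φ < π) :
    angle a (g + ((‖g‖ / ‖a‖) * (Real.sin φ * Real.tan Δ - Real.cos φ)) • a) = π / 2 - Δ := by
  have hA : 0 < ‖a‖ := norm_pos_iff.mpr ha
  have hG : 0 < ‖g‖ := norm_pos_iff.mpr hg
  have hs : 0 < Real.sin φ := Real.sin_pos_of_pos_of_lt_pi (by linarith) hφ2
  have hc : 0 < Real.cos Δ := Real.cos_pos_of_mem_Ioo ⟨by linarith, hΔ1⟩
  have hag : inner ℝ a g = ‖a‖ * ‖g‖ * Real.cos φ := by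
    have := InnerProductGeometry.cos_angle_mul_norm_mul_norm a g
    rw [← hφ] at this
    linarith
  have ht : Real.tan Δ * Real.cos Δ = Real.sin Δ := Real.tan_mul_cos hc.ne'
  have hsc := Real.sin_sq_add_cos_sq φ
  have hsc2 := Real.sin_sq_add_cos_sq Δ
  set t := Real.tan Δ
  have ht2 : (1 + t ^ 2) * Real.cos Δ ^ 2 = 1 := by
    rw [← ht] at hsc2
    linarith
  set k := (‖g‖ / ‖a‖) * (Real.sin φ * t - Real.cos φ) with hk
  have hkA : k * ‖a‖ = ‖g‖ * (Real.sin φ * t - Real.cos φ) := by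
    rw [hk]; field_simp
  have hin : inner ℝ a (g + k • a) = ‖a‖ * ‖g‖ * Real.sin φ * t := by
    rw [inner_add_right, inner_smul_right, real_inner_self_eq_norm_sq, hag]
    linear_combination ‖a‖ * hkA
  have hn2 : ‖g + k • a‖ ^ 2 = ‖g‖ ^ 2 * Real.sin φ ^ 2 * (1 + t ^ 2) := by
    rw [norm_add_sq_real, inner_smul_right, real_inner_comm, hag, norm_smul, mul_pow,
      Real.norm_eq_abs, sq_abs]
    linear_combination (2 * ‖g‖ * Real.cos φ + k * ‖a‖ +
      ‖g‖ * (Real.sin φ * t - Real.cos φ)) * hkA - ‖g‖ ^ 2 * hsc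
  have hn : ‖g + k • a‖ * Real.cos Δ = ‖g‖ * Real.sin φ := by
    have h : (‖g + k • a‖ * Real.cos Δ) ^ 2 = (‖g‖ * Real.sin φ) ^ 2 := by
      rw [mul_pow, hn2]
      linear_combination ‖g‖ ^ 2 * Real.sin φ ^ 2 * ht2
    exact (sq_eq_sq₀ (by positivity) (by positivity)).mp h
  have hp : 0 < ‖g + k • a‖ := by
    have : 0 < ‖g + k • a‖ * Real.cos Δ := by rw [hn]; positivity
    exact pos_of_mul_pos_left this hc.le
  have hq : inner ℝ a (g + k • a) / (‖a‖ * ‖g + k • a‖) = Real.cos (π / 2 - Δ) := by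
    rw [Real.cos_pi_div_two_sub, div_eq_iff (by positivity), hin, ← ht]
    linear_combination -(‖a‖ * t) * hn
  rw [InnerProductGeometry.angle, hq, Real.arccos_cos (by linarith) (by linarith)]
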